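/- Let K be a field, S = K[x_1,...,x_n,y_1,...,y_m], and let 1 ≤ q < s ≤ n and 1 ≤ t < r ≤ m. Then I_s ∩ (I_q J_t + J_r) = I_s J_t, and consequently there is a short exact sequence 0 → S/(I_s J_t) → S/I_s ⊕ S/(I_q J_t + J_r) → S/(I_s + I_q J_t + J_r) → 0. -/

import Mathlib

/-!
Since `I_q J_t ⊆ J_t` and, because `t < r`, `J_r ⊆ J_t` (`squarefreeIdeal_anti`), the intersection
`I_s ∩ (I_q J_t + J_r)` lies in `I_s ∩ J_t`. Ideals generated by monomials in disjoint sets of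
variables satisfy `I_s ∩ J_t = I_s J_t`: a monomial divisible by a square-free monomial in the
`x_i` and by one in the `y_j` is divisible by their product
(`squarefreeIdeal_inf_le_mul`). Conversely `I_s J_t ⊆ I_q J_t` because `q < s`.
The exact sequence holds for any two submodules `A`, `B` of a module (`ses_of_submodules`).
-/

open MvPolynomial

/-- `Iq K n m q` is the ideal of `S = K[x_1,…,x_n,y_1,…,y_m]` (realized as the polynomial
ring on `Fin (n+m)`, the first `n` indices being the `x`-variables) generated by all
square-free monomials of degree `q` in the `x`-variables.  For `q = 0` it is the unit ideal. -/
noncomputable def Iq (K : Type) [Field K] (n m q : ℕ) : Ideal (MvPolynomial (Fin (n + m)) K) :=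
  Ideal.span {f | ∃ s : Finset (Fin (n + m)), (∀ i ∈ s, (i : ℕ) < n) ∧ s.card = q ∧
    f = ∏ i ∈ s, X i}

/-- `Jr K n m r` is the ideal of `S = K[x_1,…,x_n,y_1,…,y_m]` generated by all square-free
monomials of degree `r` in the `y`-variables (the last `m` indices of `Fin (n+m)`).
For `r = 0` it is the unit ideal. -/
noncomputable def Jr (K : Type) [Field K] (n m r : ℕ) : Ideal (MvPolynomial (Fin (n + m)) K) :=
  Ideal.span {f | ∃ s : Finset (Fin (n + m)), (∀ i ∈ s, n ≤ (i : ℕ)) ∧ s.card = r ∧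
    f = ∏ i ∈ s, X i}

/-- The ideal generated by the square-free monomials of degree `k` in the variables satisfying `p`;
the common form of `Iq` and `Jr`. -/
noncomputable def squarefreeIdeal (K : Type) [Field K] {σ : Type} (p : σ → Prop) (k : ℕ) :
    Ideal (MvPolynomial σ K) :=
  Ideal.span {f | ∃ s : Finset σ, (∀ i ∈ s, p i) ∧ s.card = k ∧ f = ∏ i ∈ s, X i}

lemma squarefreeIdeal_anti (K : Type) [Field K] {σ : Type} (p : σ → Prop) {k l : ℕ} (h : k ≤ l) :
    squarefreeIdeal K p l ≤ squarefreeIdeal K p k := by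
  refine Ideal.span_le.2 ?_
  rintro _ ⟨s, hs, hc, rfl⟩
  obtain ⟨u, hu, huc⟩ := Finset.exists_subset_card_eq (hc ▸ h : k ≤ s.card)
  exact Ideal.mem_of_dvd _ (Finset.prod_dvd_prod_of_subset u s _ hu)
    (Ideal.subset_span ⟨u, fun i hi => hs i (hu hi), huc, rfl⟩)

lemma prod_X_eq_monomial (K : Type) [Field K] {σ : Type} (s : Finset σ) :
    (∏ i ∈ s, X i : MvPolynomial σ K) = monomial (∑ i ∈ s, Finsupp.single i 1) 1 := by
  simp [monomial_sum_one, X]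

/-- Every exponent occurring in an element of the ideal is positive on some admissible `k`-set. -/
lemma exists_subset_support_of_mem (K : Type) [Field K] {σ : Type} {p : σ → Prop} {k : ℕ}
    {f : MvPolynomial σ K} (hf : f ∈ squarefreeIdeal K p k) {d : σ →₀ ℕ} (hd : d ∈ f.support) :
    ∃ s : Finset σ, (∀ i ∈ s, p i) ∧ s.card = k ∧ s ⊆ d.support := by
  have hset : {f : MvPolynomial σ K | ∃ s : Finset σ, (∀ i ∈ s, p i) ∧ s.card = k ∧
      f = ∏ i ∈ s, X i} = (fun e => monomial e (1 : K)) '' {e | ∃ s : Finset σ,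
      (∀ i ∈ s, p i) ∧ s.card = k ∧ e = ∑ i ∈ s, Finsupp.single i 1} := by
    ext g
    constructor
    · rintro ⟨s, h1, h2, rfl⟩
      exact ⟨_, ⟨s, h1, h2, rfl⟩, (prod_X_eq_monomial K s).symm⟩
    · rintro ⟨_, ⟨s, h1, h2, rfl⟩, rfl⟩
      exact ⟨s, h1, h2, (prod_X_eq_monomial K s).symm⟩
  rw [squarefreeIdeal, hset, mem_ideal_span_monomial_image] at hf
  obtain ⟨_, ⟨s, h1, h2, rfl⟩, hle⟩ := hf d hd
  refine ⟨s, h1, h2, fun i hi => ?_⟩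
  have h3 : Finsupp.single i 1 ≤ d :=
    (Finset.single_le_sum (f := fun i => Finsupp.single i 1) (fun _ _ => zero_le) hi).trans hle
  have h4 := h3 i
  rw [Finsupp.single_eq_same] at h4
  exact Finsupp.mem_support_iff.2 (by omega)

lemma prod_X_dvd_monomial (K : Type) [Field K] {σ : Type} {s : Finset σ} {d : σ →₀ ℕ}
    (hs : s ⊆ d.support) (c : K) : (∏ i ∈ s, X i) ∣ monomial d c := by
  rw [monomial_eq]
  refine Dvd.dvd.mul_left ?_ _
  refine (Finset.prod_dvd_prod_of_dvd _ _ fun i hi => ?_).trans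
    (Finset.prod_dvd_prod_of_subset s d.support (fun i => X i ^ d i) hs)
  exact dvd_pow_self _ (Finsupp.mem_support_iff.1 (hs hi))

/-- For disjoint sets of variables the intersection is contained in the product: the union of an
admissible set for `p` and one for `p'` is disjoint, so the product of the two square-free
monomials still divides each monomial of an element of the intersection. -/
lemma squarefreeIdeal_inf_le_mul (K : Type) [Field K] {σ : Type} {p p' : σ → Prop}
    (hpp : ∀ i, p i → ¬ p' i) (k l : ℕ) :
    squarefreeIdeal K p k ⊓ squarefreeIdeal K p' l ≤
      squarefreeIdeal K p k * squarefreeIdeal K p' l := by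
  classical
  rintro f ⟨h1, h2⟩
  rw [f.as_sum]
  refine Ideal.sum_mem _ fun d hd => ?_
  obtain ⟨u, hu, huc, hus⟩ := exists_subset_support_of_mem K h1 hd
  obtain ⟨v, hv, hvc, hvs⟩ := exists_subset_support_of_mem K h2 hd
  have huv : Disjoint u v :=
    Finset.disjoint_left.2 fun i hi hi' => hpp i (hu i hi) (hv i hi')
  refine Ideal.mem_of_dvd _ (prod_X_dvd_monomial K (Finset.union_subset hus hvs) _) ?_
  rw [Finset.prod_union huv]
  exact Ideal.mul_mem_mul (Ideal.subset_span ⟨u, hu, huc, rfl⟩)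
    (Ideal.subset_span ⟨v, hv, hvc, rfl⟩)

/-- The exact sequence `0 → M/(A ∩ B) → M/A ⊕ M/B → M/(A + B) → 0`. -/
lemma ses_of_submodules {R M : Type*} [Ring R] [AddCommGroup M] [Module R M]
    (A B : Submodule R M) :
    let f : (M ⧸ (A ⊓ B)) →ₗ[R] (M ⧸ A) × (M ⧸ B) :=
      LinearMap.prod (Submodule.mapQ (A ⊓ B) A LinearMap.id inf_le_left)
        (Submodule.mapQ (A ⊓ B) B LinearMap.id inf_le_right)
    let g : (M ⧸ A) × (M ⧸ B) →ₗ[R] M ⧸ (A ⊔ B) :=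
      (Submodule.mapQ A (A ⊔ B) LinearMap.id le_sup_left).comp (LinearMap.fst R _ _) -
        (Submodule.mapQ B (A ⊔ B) LinearMap.id le_sup_right).comp (LinearMap.snd R _ _)
    Function.Injective f ∧ Function.Surjective g ∧ LinearMap.range f = LinearMap.ker g := by
  intro f g
  have hf (x : M) : f (Submodule.Quotient.mk x) =
      (Submodule.Quotient.mk x, Submodule.Quotient.mk x) := rfl
  have hg (x y : M) : g (Submodule.Quotient.mk x, Submodule.Quotient.mk y) =
      Submodule.Quotient.mk (x - y) := rfl
  refine ⟨?_, ?_, ?_⟩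
  · rw [injective_iff_map_eq_zero]
    intro z hz
    obtain ⟨x, rfl⟩ := Submodule.Quotient.mk_surjective _ z
    rw [hf, Prod.mk_eq_zero, Submodule.Quotient.mk_eq_zero, Submodule.Quotient.mk_eq_zero] at hz
    exact (Submodule.Quotient.mk_eq_zero _).2 hz
  · intro z
    obtain ⟨x, rfl⟩ := Submodule.Quotient.mk_surjective _ z
    exact ⟨(Submodule.Quotient.mk x, Submodule.Quotient.mk 0), by rw [hg, sub_zero]⟩
  · ext ⟨a, b⟩
    obtain ⟨x, rfl⟩ := Submodule.Quotient.mk_surjective _ a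
    obtain ⟨y, rfl⟩ := Submodule.Quotient.mk_surjective _ b
    rw [LinearMap.mem_ker, hg, Submodule.Quotient.mk_eq_zero, LinearMap.mem_range]
    constructor
    · rintro ⟨z, hz⟩
      obtain ⟨w, rfl⟩ := Submodule.Quotient.mk_surjective _ z
      rw [hf, Prod.mk.injEq, Submodule.Quotient.eq, Submodule.Quotient.eq] at hz
      have h := sub_mem (Submodule.mem_sup_right (S := A) hz.2)
        (Submodule.mem_sup_left (T := B) hz.1)
      rwa [sub_sub_sub_cancel_left] at h
    · intro h
      obtain ⟨a, ha, b, hb, hab⟩ := Submodule.mem_sup.1 h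
      -- `x - y = a + b`, so `x - a = y + b` is a common lift of the classes of `x` and `y`.
      refine ⟨Submodule.Quotient.mk (x - a), ?_⟩
      rw [hf, Prod.mk.injEq, Submodule.Quotient.eq, Submodule.Quotient.eq]
      refine ⟨by simpa using ha, ?_⟩
      have : x - a - y = b := by rw [sub_right_comm, ← hab, add_sub_cancel_left]
      rwa [this]

/-- Intersection formula `I_s ∩ (I_q J_t + J_r) = I_s J_t` for `q < s`, `t < r`, and the
resulting short exact sequence
`0 → S/(I_s ∩ (I_q J_t + J_r)) → S/I_s ⊕ S/(I_q J_t + J_r) → S/(I_s + I_q J_t + J_r) → 0`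
given by the canonical maps `x ↦ (x, x)` and `(a, b) ↦ a - b`. -/
theorem intersection_ses' (K : Type) [Field K] (n m q r s t : ℕ)
    (hq1 : 1 ≤ q) (hqs : q < s) (hsn : s ≤ n) (ht1 : 1 ≤ t) (htr : t < r) (hrm : r ≤ m) :
    Iq K n m s ⊓ (Iq K n m q * Jr K n m t + Jr K n m r) = Iq K n m s * Jr K n m t ∧
    (let S := MvPolynomial (Fin (n + m)) K
     let A := Iq K n m s
     let B := Iq K n m q * Jr K n m t + Jr K n m r
     let f : (S ⧸ (A ⊓ B)) →ₗ[S] (S ⧸ A) × (S ⧸ B) :=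
       LinearMap.prod (Submodule.mapQ (A ⊓ B) A LinearMap.id inf_le_left)
         (Submodule.mapQ (A ⊓ B) B LinearMap.id inf_le_right)
     let g : (S ⧸ A) × (S ⧸ B) →ₗ[S] S ⧸ (A + B) :=
       (Submodule.mapQ A (A + B) LinearMap.id le_sup_left).comp (LinearMap.fst S _ _) -
         (Submodule.mapQ B (A + B) LinearMap.id le_sup_right).comp (LinearMap.snd S _ _)
     Function.Injective f ∧ Function.Surjective g ∧ LinearMap.range f = LinearMap.ker g) := by
  refine ⟨?_, ses_of_submodules _ _⟩
  have hI (k : ℕ) : Iq K n m k = squarefreeIdeal K (fun i : Fin (n + m) => (i : ℕ) < n) k := rfl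
  have hJ (k : ℕ) : Jr K n m k = squarefreeIdeal K (fun i : Fin (n + m) => n ≤ (i : ℕ)) k := rfl
  apply le_antisymm
  · have hB : Iq K n m q * Jr K n m t + Jr K n m r ≤ Jr K n m t :=
      sup_le Ideal.mul_le_right (squarefreeIdeal_anti K _ htr.le)
    refine (inf_le_inf_left _ hB).trans ?_
    rw [hI, hJ]
    exact squarefreeIdeal_inf_le_mul K (fun i h => not_le.2 h) s t
  · exact le_inf Ideal.mul_le_left
      ((Ideal.mul_mono_left (squarefreeIdeal_anti K _ hqs.le)).trans le_sup_left)
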